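/- Let n ≥ 1, 1 < p < ∞, 0 ≤ α < n(p-1), let m ∈ ℕ with 2 ≤ m < (n+α)/p, and let G : ℝ → ℝ be twice continuously differentiable. If for every f in the weighted Sobolev space W^m_p(ℝ^n, |·|^α) the composition G ∘ f again belongs to W^m_p(ℝ^n, |·|^α), then there exists a constant c ∈ ℝ such that G(t) = c t for all t ∈ ℝ. -/

import Mathlib

/-!
Write `s = (n + α) / p`; since `α < n (p - 1)`, `m < s < n`. Applying the hypothesis to `f = 0`
gives `G 0 = 0`, because nonzero constants are not in `L^p(|·|^α)`. If `G` were not linear, there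
would be a test function `θ` on the line with `A = ∫ G θ'' ≠ 0`.

Let `ψ(x) = x_0 χ(x_0) ∏_{l ≠ 0} b(x_l)`, with `χ = 1` near `0` and `b` a bump supported in
`[1, 4]`, and put `f(x) = ∑_j λ_j ψ(R_j x)` with `λ_j = 2^{-j} R_j^{s-m}` and `R_j` distinct
powers of `8`. The supports of the terms are disjoint, and `memSobolev_series` shows by scaling
that `f` lies in the weighted Sobolev space, however fast `R_j` grows.

Let `g` be the weak derivative `∂_0^m (G ∘ f)`. It is paired with
`Φ_j(x) = φ_{λ_j}(R_j x_0) ∏_{l ≠ 0} b₁(R_j x_l)`, where `b₁` is a narrower bump and `φ_r(t)` is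
`r^{-(m-2)} Θ(r t)` cut off to a bounded interval, `Θ` being an antiderivative of `θ` of order
`m - 2`. On the support of `Φ_j` the function `f` is `λ_j ψ(R_j x)`, so that
(`exists_oneD`, `integral_series_pairing`)
`∫ (G ∘ f) ∂_0^m Φ_j = R_j^{m-n} λ_j A (∫ b₁)^{n-1} = 2^{-j} R_j^{s-n} A (∫ b₁)^{n-1}`.
Hölder's inequality (`holder_scaled`) bounds the same quantity by
`R_j^{s-n} ‖g‖ ‖φ_{λ_j} ⊗ b₁ ⊗ ⋯ ⊗ b₁‖_{L^q}`, where `q` is the exponent conjugate to `p`. As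
`|φ_r(t)| ≤ C / (1 + r |t|)`, the last factor tends to `0` as `λ_j → ∞`
(`tendsto_lintegral_tens`), hence is at most `4^{-j}` once `R_j` grows fast enough, which is
possible because `s > m`. Then `|A| (∫ b₁)^{n-1} ≤ 2^{-j} ‖g‖` for every `j`, which is absurd.
-/

open MeasureTheory ENNReal

noncomputable section

/-- Weighted `L^p` norm `(∫ |f(x)|^p |x|^α dx)^(1/p)`. -/
noncomputable def wLp (n : ℕ) (p α : ℝ) (f : EuclideanSpace ℝ (Fin n) → ℝ) : ℝ≥0∞ :=
  (∫⁻ x, (‖f x‖₊ : ℝ≥0∞) ^ p * (‖x‖₊ : ℝ≥0∞) ^ α) ^ (1 / p)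

/-- Partial derivative in the `i`-th coordinate direction. -/
noncomputable def pderivCoord (n : ℕ) (i : Fin n) (φ : EuclideanSpace ℝ (Fin n) → ℝ) :
    EuclideanSpace ℝ (Fin n) → ℝ :=
  fun x => fderiv ℝ φ x (EuclideanSpace.single i 1)

/-- Iterated partial derivative `∂^β φ` associated with a multi-index `β : Fin n → ℕ`. -/
noncomputable def mderiv (n : ℕ) (β : Fin n → ℕ) (φ : EuclideanSpace ℝ (Fin n) → ℝ) :
    EuclideanSpace ℝ (Fin n) → ℝ :=
  (List.finRange n).foldr (fun i ψ => (pderivCoord n i)^[β i] ψ) φ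

/-- Membership in the weighted Sobolev space `W^m_p(ℝ^n, |·|^α)`: `f` is locally integrable,
belongs to `L^p(ℝ^n, |·|^α)`, and all distributional derivatives of `f` up to order `m`
are represented by functions in `L^p(ℝ^n, |·|^α)`. -/
def MemSobolev (n : ℕ) (p α : ℝ) (m : ℕ) (f : EuclideanSpace ℝ (Fin n) → ℝ) : Prop :=
  LocallyIntegrable f volume ∧ wLp n p α f < ∞ ∧
    ∀ β : Fin n → ℕ, (∑ i, β i) ≤ m →
      ∃ g : EuclideanSpace ℝ (Fin n) → ℝ, LocallyIntegrable g volume ∧ wLp n p α g < ∞ ∧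
        ∀ φ : EuclideanSpace ℝ (Fin n) → ℝ, ContDiff ℝ (⊤ : ℕ∞) φ → HasCompactSupport φ →
          ∫ x, f x * mderiv n β φ x = (-1 : ℝ) ^ (∑ i, β i) * ∫ x, g x * φ x

/-! ### Test functions and partial derivatives -/

/-- Smooth compactly supported functions. -/
def IsTest {V : Type*} [NormedAddCommGroup V] [NormedSpace ℝ V] (φ : V → ℝ) : Prop :=
  ContDiff ℝ (⊤ : ℕ∞) φ ∧ HasCompactSupport φ

theorem IsTest.integrable {n : ℕ} {φ : EuclideanSpace ℝ (Fin n) → ℝ} (h : IsTest φ) :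
    Integrable φ := h.1.continuous.integrable_of_hasCompactSupport h.2

theorem IsTest.comp_smul {n : ℕ} {φ : EuclideanSpace ℝ (Fin n) → ℝ} (h : IsTest φ) {R : ℝ}
    (hR : R ≠ 0) : IsTest (fun x => φ (R • x)) :=
  ⟨h.1.comp (contDiff_const_smul R), h.2.comp_homeomorph (Homeomorph.smulOfNeZero R hR)⟩

theorem IsTest.pderivCoord {n : ℕ} {φ : EuclideanSpace ℝ (Fin n) → ℝ} (h : IsTest φ) (i : Fin n) :
    IsTest (pderivCoord n i φ) := by
  refine ⟨(h.1.fderiv_right (m := (⊤ : ℕ∞)) (by simp)).clm_apply contDiff_const, ?_⟩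
  exact h.2.fderiv_apply (𝕜 := ℝ) _

/-- `T` acts on test functions as a differential operator that is homogeneous of degree `k`:
it has a formal adjoint on test functions, up to the sign `(-1)^k`, which scales like `R^k` under
dilation by `R`, and which does not enlarge supports. -/
def HomogAdj (n k : ℕ)
    (T : (EuclideanSpace ℝ (Fin n) → ℝ) → (EuclideanSpace ℝ (Fin n) → ℝ)) : Prop :=
  (∀ φ, IsTest φ → IsTest (T φ)) ∧
  ∀ ψ, IsTest ψ → ∃ ψ', IsTest ψ' ∧ tsupport ψ' ⊆ tsupport ψ ∧
    ∀ R : ℝ, 0 < R → ∀ φ, IsTest φ →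
      ∫ x, ψ (R • x) * T φ x = (-1) ^ k * (R ^ k * ∫ x, ψ' (R • x) * φ x)

theorem HomogAdj.id (n : ℕ) : HomogAdj n 0 (fun φ => φ) :=
  ⟨fun _ h => h, fun ψ h => ⟨ψ, h, subset_rfl, fun R _ φ _ => by simp⟩⟩

theorem HomogAdj.comp {n k l : ℕ}
    {S T : (EuclideanSpace ℝ (Fin n) → ℝ) → (EuclideanSpace ℝ (Fin n) → ℝ)}
    (hS : HomogAdj n k S) (hT : HomogAdj n l T) : HomogAdj n (k + l) (fun φ => S (T φ)) := by
  refine ⟨fun φ h => hS.1 _ (hT.1 _ h), fun ψ hψ => ?_⟩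
  obtain ⟨ψ₁, h₁, hs₁, H₁⟩ := hS.2 ψ hψ
  obtain ⟨ψ₂, h₂, hs₂, H₂⟩ := hT.2 ψ₁ h₁
  refine ⟨ψ₂, h₂, hs₂.trans hs₁, fun R hR φ hφ => ?_⟩
  rw [H₁ R hR _ (hT.1 _ hφ), H₂ R hR _ hφ]
  ring

theorem HomogAdj.pderivCoord {n : ℕ} (i : Fin n) : HomogAdj n 1 (pderivCoord n i) := by
  refine ⟨fun φ h => h.pderivCoord i, fun ψ hψ => ⟨_, hψ.pderivCoord i, ?_, ?_⟩⟩
  · exact tsupport_fderiv_apply_subset ℝ _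
  intro R hR φ hφ
  have hψR := hψ.comp_smul hR.ne'
  have hd : ∀ x, fderiv ℝ (fun x => ψ (R • x)) x (EuclideanSpace.single i 1)
      = R * _root_.pderivCoord n i ψ (R • x) := by
    intro x
    have h1 : HasFDerivAt (fun x => ψ (R • x)) ((fderiv ℝ ψ (R • x)).comp
        (R • ContinuousLinearMap.id ℝ _)) x := by
      apply HasFDerivAt.comp x (f := fun x => R • x)
      · exact (hψ.1.differentiable (by simp) _).hasFDerivAt
      · exact (hasFDerivAt_id x).const_smul R
    rw [h1.fderiv]
    simp [_root_.pderivCoord]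
  have key := integral_mul_fderiv_eq_neg_fderiv_mul_of_integrable (μ := volume)
    (f := fun x => ψ (R • x)) (g := φ) (v := EuclideanSpace.single i (1 : ℝ)) ?_ ?_ ?_
    (fun x _ => hψR.1.differentiable (by simp) x) (fun x _ => hφ.1.differentiable (by simp) x)
  · simp only [hd] at key
    unfold _root_.pderivCoord at key ⊢
    rw [key, ← integral_const_mul, pow_one, pow_one, neg_one_mul]
    simp only [mul_assoc]
  · exact ((hψR.pderivCoord i).1.continuous.mul hφ.1.continuous).integrable_of_hasCompactSupport
      hφ.2.mul_left
  · exact (hψR.1.continuous.mul (hφ.pderivCoord i).1.continuous).integrable_of_hasCompactSupport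
      (hφ.pderivCoord i).2.mul_left
  · exact (hψR.1.continuous.mul hφ.1.continuous).integrable_of_hasCompactSupport
      hφ.2.mul_left

theorem HomogAdj.iterate {n k : ℕ}
    {T : (EuclideanSpace ℝ (Fin n) → ℝ) → (EuclideanSpace ℝ (Fin n) → ℝ)}
    (hT : HomogAdj n 1 T) : HomogAdj n k (T^[k]) := by
  induction k with
  | zero => exact HomogAdj.id n
  | succ k ih => exact ih.comp hT

theorem HomogAdj.mderiv {n : ℕ} (β : Fin n → ℕ) : HomogAdj n (∑ i, β i) (mderiv n β) := by
  have key : ∀ l : List (Fin n), HomogAdj n ((l.map β).sum)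
      (fun φ => l.foldr (fun i ψ => (_root_.pderivCoord n i)^[β i] ψ) φ) := by
    intro l
    induction l with
    | nil => exact HomogAdj.id n
    | cons i l ih =>
      simp only [List.foldr_cons, List.map_cons, List.sum_cons]
      exact (HomogAdj.pderivCoord i).iterate.comp ih
  have := key (List.finRange n)
  rwa [← List.ofFn_eq_map, List.sum_ofFn] at this

theorem mderiv_single {n : ℕ} (i : Fin n) (m : ℕ) (φ : EuclideanSpace ℝ (Fin n) → ℝ) :
    mderiv n (Pi.single i m) φ = (pderivCoord n i)^[m] φ := by
  have key : ∀ l : List (Fin n), l.Nodup →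
      l.foldr (fun j ψ => (pderivCoord n j)^[(Pi.single i m : Fin n → ℕ) j] ψ) φ
        = if i ∈ l then (pderivCoord n i)^[m] φ else φ := by
    intro l hl
    induction l with
    | nil => simp
    | cons j l ih =>
      rw [List.nodup_cons] at hl
      rw [List.foldr_cons, ih hl.2]
      by_cases hij : j = i
      · subst hij
        simp [hl.1]
      · have : i ≠ j := fun h => hij h.symm
        simp [hij, this]
  rw [mderiv, key _ (List.nodup_finRange n), if_pos (List.mem_finRange i)]

/-! ### Products of functions of one coordinate -/

/-- The function `x ↦ a (x i) * ∏_{l ≠ i} b (x l)`. -/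
def tens {n : ℕ} (i : Fin n) (a b : ℝ → ℝ) : EuclideanSpace ℝ (Fin n) → ℝ :=
  fun x => a (x i) * ∏ l ∈ Finset.univ.erase i, b (x l)

theorem contDiff_tens {n : ℕ} (i : Fin n) {a b : ℝ → ℝ} {k : ℕ∞} (ha : ContDiff ℝ k a)
    (hb : ContDiff ℝ k b) : ContDiff ℝ k (tens i a b) := by
  unfold tens
  have h : ∀ l : Fin n, ContDiff ℝ k (fun x : EuclideanSpace ℝ (Fin n) => x l) := fun l => by
    fun_prop
  exact (ha.comp (h i)).mul (contDiff_prod fun l _ => hb.comp (h l))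

theorem isTest_tens {n : ℕ} (i : Fin n) {a b : ℝ → ℝ} (ha : IsTest a) (hb : IsTest b) :
    IsTest (tens i a b) := by
  refine ⟨contDiff_tens i ha.1 hb.1, ?_⟩
  have hK : IsCompact ((WithLp.toLp 2 : (Fin n → ℝ) → EuclideanSpace ℝ (Fin n)) ''
      (Set.univ.pi fun _ => tsupport a ∪ tsupport b)) :=
    (isCompact_univ_pi fun _ => ha.2.isCompact.union hb.2.isCompact).image
      (PiLp.continuous_toLp 2 _)
  refine HasCompactSupport.intro hK fun x hx => ?_
  by_contra h
  apply hx
  refine ⟨x.ofLp, fun l _ => ?_, rfl⟩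
  rw [tens] at h
  by_cases hl : l = i
  · subst hl
    exact Or.inl (subset_tsupport _ (left_ne_zero_of_mul h))
  · exact Or.inr (subset_tsupport _ (Finset.prod_ne_zero_iff.1 (right_ne_zero_of_mul h) l
      (by simp [hl])))

theorem pderivCoord_tens {n : ℕ} (i : Fin n) {a b : ℝ → ℝ} (ha : ContDiff ℝ (⊤ : ℕ∞) a)
    (hb : ContDiff ℝ (⊤ : ℕ∞) b) : pderivCoord n i (tens i a b) = tens i (deriv a) b := by
  funext x
  have hc : HasDerivAt (fun t : ℝ => tens i a b (x + t • EuclideanSpace.single i 1))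
      (pderivCoord n i (tens i a b) x) 0 := by
    have h1 : HasFDerivAt (tens i a b) (fderiv ℝ (tens i a b) x)
        (x + (0 : ℝ) • EuclideanSpace.single i 1) := by
      simpa using ((contDiff_tens i ha hb).differentiable (by simp) x).hasFDerivAt
    have h2 : HasDerivAt (fun t : ℝ => x + t • (EuclideanSpace.single i 1 : EuclideanSpace ℝ (Fin n)))
        (EuclideanSpace.single i 1) 0 := by
      simpa using ((hasDerivAt_id (0 : ℝ)).smul_const
        (EuclideanSpace.single i 1 : EuclideanSpace ℝ (Fin n))).const_add x
    exact h1.comp_hasDerivAt 0 h2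
  have hd : HasDerivAt (fun t : ℝ => tens i a b (x + t • EuclideanSpace.single i 1))
      (tens i (deriv a) b x) 0 := by
    have : (fun t : ℝ => tens i a b (x + t • EuclideanSpace.single i 1))
        = fun t => a (x i + t) * ∏ l ∈ Finset.univ.erase i, b (x l) := by
      funext t
      simp only [tens]
      congr 1
      · simp
      · refine Finset.prod_congr rfl fun l hl => ?_
        simp [(Finset.mem_erase.1 hl).1]
    rw [this]
    have h3 : HasDerivAt a (deriv a (x i)) (x i + 0) := by
      simpa using (ha.differentiable (by simp) (x i)).hasDerivAt
    exact (h3.comp_const_add (x i) 0).mul_const _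
  exact hc.unique hd

theorem mderiv_single_tens {n : ℕ} (i : Fin n) (m : ℕ) {a b : ℝ → ℝ}
    (ha : ContDiff ℝ (⊤ : ℕ∞) a) (hb : ContDiff ℝ (⊤ : ℕ∞) b) :
    mderiv n (Pi.single i m) (tens i a b) = tens i (iteratedDeriv m a) b := by
  rw [mderiv_single]
  induction m generalizing a with
  | zero => simp
  | succ m ih =>
    rw [Function.iterate_succ_apply, pderivCoord_tens i ha hb, iteratedDeriv_succ']
    exact ih ((contDiff_infty_iff_deriv.1 ha).2)

theorem integral_tens {n : ℕ} (i : Fin n) (a b : ℝ → ℝ) :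
    ∫ x, tens i a b x = (∫ t, a t) * (∫ t, b t) ^ (n - 1) := by
  have h1 : ∀ x : EuclideanSpace ℝ (Fin n), tens i a b x
      = (fun y : Fin n → ℝ => ∏ l, (if l = i then a else b) (y l)) x.ofLp := by
    intro x
    rw [tens]
    beta_reduce
    rw [← Finset.mul_prod_erase _ _ (Finset.mem_univ i)]
    simp only [if_true]
    congr 1
    exact Finset.prod_congr rfl fun l hl => by simp [(Finset.mem_erase.1 hl).1]
  simp_rw [h1]
  rw [(PiLp.volume_preserving_ofLp (Fin n)).integral_comp
    (MeasurableEquiv.toLp 2 (Fin n → ℝ)).symm.measurableEmbedding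
    (fun y : Fin n → ℝ => ∏ l, (if l = i then a else b) (y l)),
    integral_fintype_prod_volume_eq_prod, ← Finset.mul_prod_erase _ _ (Finset.mem_univ i)]
  simp only [if_true]
  congr 1
  rw [Finset.prod_congr rfl (g := fun _ => ∫ t, b t)
    (fun l hl => by simp [(Finset.mem_erase.1 hl).1])]
  simp

/-! ### One-dimensional test functions -/

/-- If `∫ G θ'' = 0` for every test function `θ`, then `G'' = 0`, so `G` is linear. -/
theorem exists_test_of_not_linear {G : ℝ → ℝ} (hG : ContDiff ℝ 2 G) (hG0 : G 0 = 0)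
    (hlin : ¬ ∃ c : ℝ, ∀ t : ℝ, G t = c * t) :
    ∃ θ : ℝ → ℝ, IsTest θ ∧ ∫ t, G t * iteratedDeriv 2 θ t ≠ 0 := by
  by_contra! hcon
  apply hlin
  have hG1 : ContDiff ℝ 1 (deriv G) := by
    have : ContDiff ℝ (1 + 1) G := by simpa [one_add_one_eq_two] using hG
    exact (contDiff_succ_iff_deriv.1 this).2.2
  have hG2 : Continuous (deriv (deriv G)) := hG1.continuous_deriv (by simp)
  have hdG : Differentiable ℝ G := hG.differentiable (by simp)
  have hdG' : Differentiable ℝ (deriv G) := hG1.differentiable (by simp)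
  have hae : ∀ᵐ t, deriv (deriv G) t = 0 := by
    apply ae_eq_zero_of_integral_contDiff_smul_eq_zero hG2.locallyIntegrable
    intro θ hθ hθc
    have hθ' : ContDiff ℝ (⊤ : ℕ∞) (deriv θ) := (contDiff_infty_iff_deriv.1 hθ).2
    have hθ'' : ContDiff ℝ (⊤ : ℕ∞) (deriv (deriv θ)) := (contDiff_infty_iff_deriv.1 hθ').2
    have h := hcon θ ⟨hθ, hθc⟩
    rw [iteratedDeriv_succ, iteratedDeriv_one] at h
    have e1 : ∫ t, G t * deriv (deriv θ) t = - ∫ t, deriv G t * deriv θ t := by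
      apply integral_mul_deriv_eq_deriv_mul_of_integrable
      · exact fun t _ => (hdG t).hasDerivAt
      · exact fun t _ => (hθ'.differentiable (by simp) t).hasDerivAt
      · exact (hG.continuous.mul hθ''.continuous).integrable_of_hasCompactSupport
          hθc.deriv.deriv.mul_left
      · exact (hG1.continuous.mul hθ'.continuous).integrable_of_hasCompactSupport
          hθc.deriv.mul_left
      · exact (hG.continuous.mul hθ'.continuous).integrable_of_hasCompactSupport
          hθc.deriv.mul_left
    have e2 : ∫ t, deriv G t * deriv θ t = - ∫ t, deriv (deriv G) t * θ t := by
      apply integral_mul_deriv_eq_deriv_mul_of_integrable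
      · exact fun t _ => (hdG' t).hasDerivAt
      · exact fun t _ => (hθ.differentiable (by simp) t).hasDerivAt
      · exact (hG1.continuous.mul hθ'.continuous).integrable_of_hasCompactSupport
          hθc.deriv.mul_left
      · exact (hG2.mul hθ.continuous).integrable_of_hasCompactSupport hθc.mul_left
      · exact (hG1.continuous.mul hθ.continuous).integrable_of_hasCompactSupport
          hθc.mul_left
    rw [e1, e2, neg_neg] at h
    rw [← h]
    simp [mul_comm]
  have hz : deriv (deriv G) = fun _ => 0 :=
    hG2.ae_eq_iff_eq volume continuous_const |>.1 hae
  have hc : ∀ t, deriv G t = deriv G 0 := fun t =>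
    is_const_of_deriv_eq_zero hdG' (fun t => congrFun hz t) t 0
  refine ⟨deriv G 0, fun t => ?_⟩
  have hd : Differentiable ℝ (fun t => G t - deriv G 0 * t) := by fun_prop
  have := is_const_of_deriv_eq_zero hd (fun t => by
    have : HasDerivAt (fun t => G t - deriv G 0 * t) (deriv G t - deriv G 0 * 1) t :=
      (hdG t).hasDerivAt.sub ((hasDerivAt_id t).const_mul _)
    rw [this.deriv, hc t]; ring) t 0
  simp [hG0] at this
  linarith

/-- Iterated antiderivatives of a test function, normalized at `0`. After `k` integrations the
growth is only `(1 + |t|)^(k-1)`; the bound is multiplied by `1 + |t|` to cover `k = 0`. -/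
theorem exists_antideriv {θ : ℝ → ℝ} (hθ : IsTest θ) (k : ℕ) :
    ∃ Θ : ℝ → ℝ, ContDiff ℝ (⊤ : ℕ∞) Θ ∧ iteratedDeriv k Θ = θ ∧
      ∃ C : ℝ, 0 ≤ C ∧ ∀ t, (1 + |t|) * |Θ t| ≤ C * (1 + |t|) ^ k := by
  have step : ∀ Θ : ℝ → ℝ, ContDiff ℝ (⊤ : ℕ∞) Θ →
      deriv (fun t => ∫ s in (0 : ℝ)..t, Θ s) = Θ ∧
      ContDiff ℝ (⊤ : ℕ∞) (fun t => ∫ s in (0 : ℝ)..t, Θ s) := by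
    intro Θ hΘ
    have h1 : ∀ t, HasDerivAt (fun t => ∫ s in (0 : ℝ)..t, Θ s) (Θ t) t := fun t =>
      intervalIntegral.integral_hasDerivAt_right (hΘ.continuous.intervalIntegrable _ _)
        hΘ.continuous.stronglyMeasurable.stronglyMeasurableAtFilter hΘ.continuous.continuousAt
    have h2 : deriv (fun t => ∫ s in (0 : ℝ)..t, Θ s) = Θ := funext fun t => (h1 t).deriv
    refine ⟨h2, contDiff_infty_iff_deriv.2 ⟨fun t => (h1 t).differentiableAt, ?_⟩⟩
    rwa [h2]
  -- The first antiderivative of a test function is bounded, and each further integration raises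
  -- the growth by one power.
  have key : ∀ k : ℕ, ∃ Θ : ℝ → ℝ, ContDiff ℝ (⊤ : ℕ∞) Θ ∧ iteratedDeriv (k + 1) Θ = θ ∧
      ∃ C : ℝ, 0 ≤ C ∧ ∀ t, |Θ t| ≤ C * (1 + |t|) ^ k := by
    intro k
    induction k with
    | zero =>
      obtain ⟨h1, h2⟩ := step θ hθ.1
      refine ⟨_, h2, by simpa using h1, ∫ s, |θ s|, integral_nonneg fun _ => abs_nonneg _,
        fun t => ?_⟩
      have hi : Integrable (fun s => |θ s|) :=
        (hθ.1.continuous.integrable_of_hasCompactSupport hθ.2).abs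
      calc |∫ s in (0 : ℝ)..t, θ s| ≤ ∫ s in Set.uIoc 0 t, |θ s| := by
            simpa only [Real.norm_eq_abs] using
              intervalIntegral.norm_integral_le_integral_norm_uIoc (f := θ) (a := 0) (b := t)
                (μ := volume)
        _ ≤ ∫ s, |θ s| :=
            setIntegral_le_integral hi (Filter.Eventually.of_forall fun _ => abs_nonneg _)
        _ = _ := by simp
    | succ k ih =>
      obtain ⟨Θ, hΘ, hd, C, hC, hb⟩ := ih
      obtain ⟨h1, h2⟩ := step Θ hΘ
      refine ⟨_, h2, by rw [iteratedDeriv_succ', h1, hd], C, hC, fun t => ?_⟩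
      have h3 : ‖∫ s in (0 : ℝ)..t, Θ s‖ ≤ C * (1 + |t|) ^ k * |t - 0| := by
        apply intervalIntegral.norm_integral_le_of_norm_le_const
        intro s hs
        have : |s| ≤ |t| := by
          rcases Set.mem_uIoc.1 hs with h | h
          · rw [abs_of_pos h.1]; exact h.2.trans (le_abs_self t)
          · rw [abs_of_nonpos h.2, abs_of_neg (h.1.trans_le h.2)]; linarith [h.1]
        refine (hb s).trans ?_
        gcongr
      rw [sub_zero] at h3
      calc |∫ s in (0 : ℝ)..t, Θ s| ≤ C * (1 + |t|) ^ k * |t| := h3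
        _ ≤ C * (1 + |t|) ^ k * (1 + |t|) := by gcongr; linarith
        _ = _ := by ring
  cases k with
  | zero =>
    have hc : Continuous (fun t => (1 + |t|) * θ t) := by
      have := hθ.1.continuous
      fun_prop
    obtain ⟨C, hC⟩ := hc.bounded_above_of_compact_support hθ.2.mul_left
    refine ⟨θ, hθ.1, by simp, C, (norm_nonneg _).trans (hC 0), fun t => ?_⟩
    have := hC t
    rw [Real.norm_eq_abs, abs_mul, abs_of_pos (by positivity : 0 < 1 + |t|)] at this
    simpa using this
  | succ k =>
    obtain ⟨Θ, h1, h2, C, hC, hb⟩ := key k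
    refine ⟨Θ, h1, h2, C, hC, fun t => ?_⟩
    calc (1 + |t|) * |Θ t| ≤ (1 + |t|) * (C * (1 + |t|) ^ k) := by gcongr; exact hb t
      _ = _ := by ring

theorem isTest_bump {c : ℝ} (f : ContDiffBump c) : IsTest (fun t => f t) :=
  ⟨f.contDiff, f.hasCompactSupport⟩

/-- Inner cutoff on the line, equal to `1` on `[-1, 1]` and supported in `[-2, 2]`. -/
def cutIn : ContDiffBump (0 : ℝ) := ⟨1, 2, by norm_num, by norm_num⟩

/-- Outer cutoff on the line, equal to `1` on `[-3, 3]` and supported in `[-4, 4]`. -/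
def cutOut : ContDiffBump (0 : ℝ) := ⟨3, 4, by norm_num, by norm_num⟩

/-- One-dimensional test functions `φ r` which detect the nonlinearity of `G` on the profile
`t ↦ r t χ(t)` and concentrate at `0` as `r → ∞`. Here `φ r t = r^{-k} Θ(r t)`, cut off to
`|t| ≤ 4`, with `Θ` a `k`-fold antiderivative of `θ`. The growth `|Θ(t)| ≲ (1 + |t|)^(k-1)`
provides the decay `C / (1 + r |t|)`. -/
theorem exists_oneD {G : ℝ → ℝ} (hG0 : G 0 = 0) {θ : ℝ → ℝ} (hθ : IsTest θ) (k : ℕ) :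
    ∃ M C : ℝ, ∃ φ : ℝ → ℝ → ℝ, 1 ≤ M ∧ 0 ≤ C ∧ ∀ r, M ≤ r →
      IsTest (φ r) ∧ (∀ t, |φ r t| ≤ C / (1 + r * |t|)) ∧ (∀ t, 4 ≤ |t| → φ r t = 0) ∧
      ∫ t, G (r * (t * cutIn t)) * iteratedDeriv (k + 2) (φ r) t
        = r * ∫ t, G t * iteratedDeriv 2 θ t := by
  obtain ⟨Θ, hΘ, hd, C, hC, hb⟩ := exists_antideriv hθ k
  obtain ⟨M, hM⟩ := hθ.2.isCompact.isBounded.subset_closedBall 0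
  refine ⟨max M 1, C * 5 ^ k, fun r t => (r ^ k)⁻¹ * Θ (r * t) * cutOut t, le_max_right _ _,
    by positivity, fun r hr => ?_⟩
  have hr1 : 1 ≤ r := (le_max_right _ _).trans hr
  have hrM : M ≤ r := (le_max_left _ _).trans hr
  have hr0 : 0 < r := by linarith
  have hout : ∀ t : ℝ, 4 ≤ |t| → cutOut t = 0 := fun t ht => by
    apply cutOut.zero_of_le_dist
    simpa [cutOut] using ht
  have hsm : ContDiff ℝ (⊤ : ℕ∞) (fun t => (r ^ k)⁻¹ * Θ (r * t)) :=
    contDiff_const.mul (hΘ.comp (contDiff_const.mul contDiff_id))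
  refine ⟨⟨hsm.mul cutOut.contDiff, cutOut.hasCompactSupport.mul_left⟩, fun t => ?_,
    fun t ht => by simp [hout t ht], ?_⟩
  · rcases le_or_gt 4 |t| with ht | ht
    · simp only [hout t ht, mul_zero, abs_zero]; positivity
    have h1 := hb (r * t)
    rw [abs_mul r, abs_of_pos hr0] at h1
    have hpos : 0 < 1 + r * |t| := by positivity
    rw [le_div_iff₀ hpos, abs_mul, abs_mul, abs_of_pos (by positivity : 0 < (r ^ k)⁻¹),
      abs_of_nonneg cutOut.nonneg]
    calc (r ^ k)⁻¹ * |Θ (r * t)| * cutOut t * (1 + r * |t|)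
        ≤ (r ^ k)⁻¹ * |Θ (r * t)| * 1 * (1 + r * |t|) := by
          gcongr; exact cutOut.le_one
      _ = (r ^ k)⁻¹ * ((1 + r * |t|) * |Θ (r * t)|) := by ring
      _ ≤ (r ^ k)⁻¹ * (C * (1 + r * |t|) ^ k) := by gcongr
      _ ≤ (r ^ k)⁻¹ * (C * (r * 5) ^ k) := by gcongr; nlinarith
      _ = C * 5 ^ k := by rw [mul_pow]; field_simp
  · have hpt : ∀ t, G (r * (t * cutIn t)) *
        iteratedDeriv (k + 2) (fun t => (r ^ k)⁻¹ * Θ (r * t) * cutOut t) t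
        = r ^ 2 * (fun s => G s * iteratedDeriv 2 θ s) (r * t) := by
      intro t
      have hfar : 1 < |t| → iteratedDeriv 2 θ (r * t) = 0 := by
        intro ht
        have hsupp : tsupport (iteratedDeriv 2 θ) ⊆ tsupport θ := by
          rw [iteratedDeriv_succ, iteratedDeriv_one]
          exact (tsupport_deriv_subset).trans tsupport_deriv_subset
        by_contra hne
        have := hM (hsupp (subset_tsupport _ hne))
        rw [mem_closedBall_zero_iff, Real.norm_eq_abs, abs_mul, abs_of_pos hr0] at this
        nlinarith
      -- For `|t| < 3` the outer cutoff is locally `1`; for `|t| ≥ 3` the profile vanishes and `G 0 = 0`.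
      rcases lt_or_ge |t| 3 with ht3 | ht3
      · have hev : (fun t => (r ^ k)⁻¹ * Θ (r * t) * cutOut t) =ᶠ[nhds t]
            fun t => (r ^ k)⁻¹ * Θ (r * t) := by
          have : Metric.ball (0 : ℝ) 3 ∈ nhds t :=
            Metric.isOpen_ball.mem_nhds (by simpa using ht3)
          filter_upwards [this] with s hs
          rw [cutOut.one_of_mem_closedBall (Metric.ball_subset_closedBall hs), mul_one]
        have hder : iteratedDeriv (k + 2) (fun t => (r ^ k)⁻¹ * Θ (r * t) * cutOut t) t
            = r ^ 2 * iteratedDeriv 2 θ (r * t) := by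
          have hΘ' : ContDiff ℝ ((k + 2 : ℕ) : ℕ∞) Θ := hΘ.of_le (by exact_mod_cast le_top)
          rw [hev.iteratedDeriv_eq, iteratedDeriv_const_mul_field,
            iteratedDeriv_comp_const_mul hΘ', add_comm k 2]
          have : iteratedDeriv (2 + k) Θ = iteratedDeriv 2 θ := by
            rw [← hd]
            simp only [iteratedDeriv_eq_iterate]
            rw [Function.iterate_add_apply]
          rw [this, pow_add]
          field_simp
        rw [hder]
        rcases le_or_gt |t| 1 with ht1 | ht1
        · rw [cutIn.one_of_mem_closedBall (by simpa [cutIn] using ht1)]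
          simp only [mul_one]; ring
        · simp [hfar ht1]
      · have : cutIn t = 0 := cutIn.zero_of_le_dist (by simp [cutIn]; linarith)
        simp [this, hG0, hfar (by linarith)]
    simp_rw [hpt]
    rw [integral_const_mul, Measure.integral_comp_mul_left (fun s => G s * iteratedDeriv 2 θ s),
      abs_of_pos (by positivity), smul_eq_mul]
    field_simp

/-! ### Lacunary series of rescaled bumps -/

theorem lintegral_comp_smul_eucl {n : ℕ} (K : EuclideanSpace ℝ (Fin n) → ℝ≥0∞) (hK : Measurable K)
    {R : ℝ} (hR : 0 < R) :
    ∫⁻ x, K (R • x) = ENNReal.ofReal ((R ^ n)⁻¹) * ∫⁻ x, K x := by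
  have h := lintegral_map (μ := (volume : Measure (EuclideanSpace ℝ (Fin n)))) hK
    (measurable_const_smul R)
  rw [← h, Measure.map_addHaar_smul volume hR.ne', lintegral_smul_measure, finrank_euclideanSpace_fin,
    abs_of_pos (by positivity), smul_eq_mul]

theorem measurable_nnnorm_rpow {n : ℕ} (a : ℝ) :
    Measurable (fun x : EuclideanSpace ℝ (Fin n) => (‖x‖₊ : ℝ≥0∞) ^ a) :=
  (measurable_nnnorm.coe_nnreal_ennreal).pow_const a

theorem coe_nnnorm_eq_ofReal {V : Type*} [SeminormedAddCommGroup V] (x : V) :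
    (‖x‖₊ : ℝ≥0∞) = ENNReal.ofReal ‖x‖ := (ofReal_norm x).symm

theorem lintegral_test_lt_top {n : ℕ} {h : EuclideanSpace ℝ (Fin n) → ℝ} (hh : IsTest h)
    {q a : ℝ} (hq : 0 < q) (ha : 0 ≤ a) :
    ∫⁻ x, (‖h x‖₊ : ℝ≥0∞) ^ q * (‖x‖₊ : ℝ≥0∞) ^ a < ∞ := by
  have hc : Continuous (fun x => ‖h x‖ ^ q * ‖x‖ ^ a) :=
    (hh.1.continuous.norm.rpow_const fun _ => Or.inr hq.le).mul
      (continuous_norm.rpow_const fun _ => Or.inr ha)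
  have hs : HasCompactSupport (fun x => ‖h x‖ ^ q * ‖x‖ ^ a) := by
    refine HasCompactSupport.intro hh.2.isCompact fun x hx => ?_
    simp [image_eq_zero_of_notMem_tsupport hx, Real.zero_rpow hq.ne']
  have hi := (hc.integrable_of_hasCompactSupport (μ := volume) hs).hasFiniteIntegral
  rw [hasFiniteIntegral_iff_norm] at hi
  refine lt_of_eq_of_lt (lintegral_congr fun x => ?_) hi
  rw [Real.norm_of_nonneg (by positivity), ENNReal.ofReal_mul (by positivity),
    coe_nnnorm_eq_ofReal, coe_nnnorm_eq_ofReal,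
    ENNReal.ofReal_rpow_of_nonneg (norm_nonneg _) hq.le,
    ENNReal.ofReal_rpow_of_nonneg (norm_nonneg _) ha]

section Series

variable {n : ℕ} {h : EuclideanSpace ℝ (Fin n) → ℝ} {R c : ℕ → ℝ} {s : ℝ}

theorem summable_disj
    (hdisj : ∀ x i j, h (R i • x) ≠ 0 → h (R j • x) ≠ 0 → i = j) (x : EuclideanSpace ℝ (Fin n)) :
    Summable fun j => c j * h (R j • x) := by
  by_cases hx : ∃ j, h (R j • x) ≠ 0
  · obtain ⟨j, hj⟩ := hx
    refine summable_of_ne_finset_zero (s := {j}) fun i hi => ?_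
    by_contra hne
    exact hi (by simpa using hdisj x i j (right_ne_zero_of_mul hne) hj)
  · push Not at hx
    simp [hx, summable_zero]

theorem measurable_series (hh : IsTest h)
    (hdisj : ∀ x i j, h (R i • x) ≠ 0 → h (R j • x) ≠ 0 → i = j) :
    Measurable fun x => ∑' j, c j * h (R j • x) := by
  refine measurable_of_tendsto_metrizable
    (f := fun N x => ∑ j ∈ Finset.range N, c j * h (R j • x)) (fun N => ?_) ?_
  · refine Finset.measurable_sum _ fun j _ => ?_
    exact (hh.1.continuous.comp (continuous_const_smul (R j))).measurable.const_mul (c j)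
  · rw [tendsto_pi_nhds]
    exact fun x => (summable_disj hdisj x).hasSum.tendsto_sum_nat

/-- The weighted `L^q` integral of a series of disjointly supported rescaled bumps, whose `j`-th
term contributes at most a constant times `2^{-jq}`. -/
theorem lintegral_series_lt_top (hh : IsTest h) (hR : ∀ j, 1 ≤ R j)
    (hc : ∀ j, |c j| ≤ (1 / 2) ^ j * R j ^ s)
    (hdisj : ∀ x i j, h (R i • x) ≠ 0 → h (R j • x) ≠ 0 → i = j)
    {q a : ℝ} (hq : 0 < q) (ha : 0 ≤ a) (hs : s * q ≤ n + a) :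
    ∫⁻ x, (‖∑' j, c j * h (R j • x)‖₊ : ℝ≥0∞) ^ q * (‖x‖₊ : ℝ≥0∞) ^ a < ∞ := by
  have hmeas : ∀ j, Measurable fun x : EuclideanSpace ℝ (Fin n) =>
      (‖c j * h (R j • x)‖₊ : ℝ≥0∞) ^ q * (‖x‖₊ : ℝ≥0∞) ^ a := fun j =>
    ((((hh.1.continuous.comp (continuous_const_smul (R j))).measurable.const_mul
      (c j)).nnnorm.coe_nnreal_ennreal).pow_const q).mul (measurable_nnnorm_rpow a)
  have e1 : ∫⁻ x, (‖∑' j, c j * h (R j • x)‖₊ : ℝ≥0∞) ^ q * (‖x‖₊ : ℝ≥0∞) ^ a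
      = ∑' j, ∫⁻ x, (‖c j * h (R j • x)‖₊ : ℝ≥0∞) ^ q * (‖x‖₊ : ℝ≥0∞) ^ a := by
    rw [← lintegral_tsum fun j => (hmeas j).aemeasurable]
    refine lintegral_congr fun x => ?_
    by_cases hx : ∃ j, h (R j • x) ≠ 0
    · obtain ⟨j, hj⟩ := hx
      have hz : ∀ i, i ≠ j → h (R i • x) = 0 := fun i hi => by
        by_contra hne
        exact hi (hdisj x i j hne hj)
      rw [tsum_eq_single j (fun i hi => by simp [hz i hi]),
        tsum_eq_single j (fun i hi => by simp [hz i hi, hq])]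
    · push Not at hx
      simp [hx, hq]
  set I : ℝ≥0∞ := ∫⁻ x, (‖h x‖₊ : ℝ≥0∞) ^ q * (‖x‖₊ : ℝ≥0∞) ^ a with hI
  have hIlt : I < ∞ := lintegral_test_lt_top hh hq ha
  have e2 : ∀ j, ∫⁻ x, (‖c j * h (R j • x)‖₊ : ℝ≥0∞) ^ q * (‖x‖₊ : ℝ≥0∞) ^ a
      ≤ ENNReal.ofReal (((1 / 2) ^ q) ^ j) * I := by
    intro j
    have hRj : 0 < R j := lt_of_lt_of_le one_pos (hR j)
    have hpt : ∀ x : EuclideanSpace ℝ (Fin n),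
        (‖c j * h (R j • x)‖₊ : ℝ≥0∞) ^ q * (‖x‖₊ : ℝ≥0∞) ^ a
        = ENNReal.ofReal (|c j| ^ q * ((R j) ^ a)⁻¹) *
          (fun y => (‖h y‖₊ : ℝ≥0∞) ^ q * (‖y‖₊ : ℝ≥0∞) ^ a) (R j • x) := by
      intro x
      have hx : (‖x‖₊ : ℝ≥0∞) ^ a
          = ENNReal.ofReal (((R j) ^ a)⁻¹) * (‖R j • x‖₊ : ℝ≥0∞) ^ a := by
        rw [coe_nnnorm_eq_ofReal, coe_nnnorm_eq_ofReal,
          ENNReal.ofReal_rpow_of_nonneg (norm_nonneg _) ha,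
          ENNReal.ofReal_rpow_of_nonneg (norm_nonneg _) ha, ← ENNReal.ofReal_mul (by positivity),
          norm_smul, Real.norm_of_nonneg hRj.le, Real.mul_rpow hRj.le (norm_nonneg _)]
        congr 1
        have : (R j) ^ a ≠ 0 := (Real.rpow_pos_of_pos hRj a).ne'
        field_simp
      have hcq : ((‖c j‖₊ : ℝ≥0∞)) ^ q = ENNReal.ofReal (|c j| ^ q) := by
        rw [coe_nnnorm_eq_ofReal, ENNReal.ofReal_rpow_of_nonneg (norm_nonneg _) hq.le,
          Real.norm_eq_abs]
      rw [nnnorm_mul, ENNReal.coe_mul, ENNReal.mul_rpow_of_nonneg _ _ hq.le, hx, hcq,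
        ENNReal.ofReal_mul (by positivity)]
      ring
    have hKm : Measurable (fun y : EuclideanSpace ℝ (Fin n) =>
        (‖h y‖₊ : ℝ≥0∞) ^ q * (‖y‖₊ : ℝ≥0∞) ^ a) :=
      ((hh.1.continuous.measurable.nnnorm.coe_nnreal_ennreal).pow_const q).mul
        (measurable_nnnorm_rpow a)
    simp_rw [hpt]
    rw [lintegral_const_mul' _ _ ENNReal.ofReal_ne_top, lintegral_comp_smul_eucl _ hKm hRj,
      ← mul_assoc, ← ENNReal.ofReal_mul (by positivity)]
    gcongr
    have h1 : |c j| ^ q ≤ ((1 / 2) ^ q) ^ j * R j ^ (s * q) := by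
      calc |c j| ^ q ≤ ((1 / 2) ^ j * R j ^ s) ^ q :=
            Real.rpow_le_rpow (abs_nonneg _) (hc j) hq.le
        _ = _ := by
            rw [Real.mul_rpow (by positivity) (by positivity), ← Real.rpow_mul hRj.le,
              ← Real.rpow_natCast, ← Real.rpow_natCast, ← Real.rpow_mul (by norm_num),
              ← Real.rpow_mul (by norm_num), mul_comm (j : ℝ) q]
    have h2 : R j ^ (s * q) ≤ R j ^ a * R j ^ n := by
      rw [← Real.rpow_natCast, ← Real.rpow_add hRj]
      exact Real.rpow_le_rpow_of_exponent_le (hR j) (by linarith)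
    calc |c j| ^ q * (R j ^ a)⁻¹ * (R j ^ n)⁻¹
        ≤ (((1 / 2) ^ q) ^ j * (R j ^ a * R j ^ n)) * (R j ^ a)⁻¹ * (R j ^ n)⁻¹ := by
          gcongr
          exact h1.trans (by gcongr)
      _ = ((1 / 2) ^ q) ^ j := by
          have : (R j) ^ a ≠ 0 := (Real.rpow_pos_of_pos hRj a).ne'
          field_simp
  have hρ : (1 / 2 : ℝ) ^ q < 1 := Real.rpow_lt_one (by norm_num) (by norm_num) hq
  rw [e1]
  calc _ ≤ ∑' j : ℕ, ENNReal.ofReal (((1 / 2) ^ q) ^ j) * I := ENNReal.tsum_le_tsum e2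
    _ = (∑' j : ℕ, ENNReal.ofReal (((1 / 2) ^ q) ^ j)) * I := ENNReal.tsum_mul_right
    _ < ∞ := by
      refine ENNReal.mul_lt_top ?_ hIlt
      rw [← ENNReal.ofReal_tsum_of_nonneg (fun j => by positivity)
        (summable_geometric_of_lt_one (by positivity) hρ)]
      exact ENNReal.ofReal_lt_top

theorem integrable_series (hh : IsTest h) (hR : ∀ j, 1 ≤ R j)
    (hc : ∀ j, |c j| ≤ (1 / 2) ^ j * R j ^ s)
    (hdisj : ∀ x i j, h (R i • x) ≠ 0 → h (R j • x) ≠ 0 → i = j) (hs : s ≤ n) :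
    Integrable fun x => ∑' j, c j * h (R j • x) := by
  refine ⟨(measurable_series hh hdisj).aestronglyMeasurable, ?_⟩
  have := lintegral_series_lt_top hh hR hc hdisj one_pos le_rfl (by linarith : s * 1 ≤ n + 0)
  simpa [HasFiniteIntegral, enorm] using this

theorem wLp_series_lt_top (hh : IsTest h) (hR : ∀ j, 1 ≤ R j)
    (hc : ∀ j, |c j| ≤ (1 / 2) ^ j * R j ^ s)
    (hdisj : ∀ x i j, h (R i • x) ≠ 0 → h (R j • x) ≠ 0 → i = j)
    {p α : ℝ} (hp : 1 < p) (hα : 0 ≤ α) (hs : s * p ≤ n + α) :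
    wLp n p α (fun x => ∑' j, c j * h (R j • x)) < ∞ :=
  ENNReal.rpow_lt_top_of_nonneg (by positivity)
    (lintegral_series_lt_top hh hR hc hdisj (by linarith) hα hs).ne

/-- The pairing of the series with a test function can be computed term by term. -/
theorem hasSum_series (hh : IsTest h) (hR : ∀ j, 1 ≤ R j)
    (hc : ∀ j, |c j| ≤ (1 / 2) ^ j * R j ^ s) (hs : s ≤ n)
    {φ : EuclideanSpace ℝ (Fin n) → ℝ} (hφ : IsTest φ) :
    HasSum (fun j => c j * ∫ x, h (R j • x) * φ x) (∫ x, (∑' j, c j * h (R j • x)) * φ x) := by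
  obtain ⟨M, hM⟩ := hφ.1.continuous.bounded_above_of_compact_support hφ.2
  have hM0 : 0 ≤ M := (norm_nonneg _).trans (hM 0)
  have hRp : ∀ j, 0 < R j := fun j => lt_of_lt_of_le one_pos (hR j)
  have hpair : ∀ j, Integrable fun x => c j * h (R j • x) * φ x := fun j => by
    have hj := hh.comp_smul (hRp j).ne'
    exact ((continuous_const.mul hj.1.continuous).mul hφ.1.continuous).integrable_of_hasCompactSupport
      hφ.2.mul_left
  have key := hasSum_integral_of_summable_integral_norm (μ := volume)
    (F := fun j x => c j * h (R j • x) * φ x) hpair ?_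
  · simp only [tsum_mul_right] at key
    have e : (fun j => c j * ∫ x, h (R j • x) * φ x)
        = fun j => ∫ x, c j * h (R j • x) * φ x := by
      funext j
      rw [← integral_const_mul]
      simp only [mul_assoc]
    rw [e]
    exact key
  refine Summable.of_nonneg_of_le (fun j => integral_nonneg fun x => norm_nonneg _)
    (f := fun j => (1 / 2 : ℝ) ^ j * (M * ∫ x, ‖h x‖)) (fun j => ?_)
    ((summable_geometric_of_lt_one (by norm_num) (by norm_num)).mul_right _)
  have hj := (hh.comp_smul (hRp j).ne').integrable
  calc ∫ x, ‖c j * h (R j • x) * φ x‖ ≤ ∫ x, |c j| * M * ‖h (R j • x)‖ := by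
        refine integral_mono (hpair j).norm (hj.norm.const_mul _) fun x => ?_
        simp only [norm_mul, Real.norm_eq_abs (c j)]
        calc |c j| * ‖h (R j • x)‖ * ‖φ x‖ ≤ |c j| * ‖h (R j • x)‖ * M := by gcongr; exact hM x
          _ = _ := by ring
    _ = |c j| * (R j ^ n)⁻¹ * (M * ∫ x, ‖h x‖) := by
        rw [integral_const_mul, Measure.integral_comp_smul volume (fun x => ‖h x‖),
          finrank_euclideanSpace_fin, abs_of_pos (inv_pos.2 (pow_pos (hRp j) n)), smul_eq_mul]
        ring
    _ ≤ (1 / 2) ^ j * (M * ∫ x, ‖h x‖) := by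
        have hI : 0 ≤ ∫ x, ‖h x‖ := integral_nonneg fun x => norm_nonneg _
        gcongr
        have : R j ^ s ≤ R j ^ n := by
          rw [← Real.rpow_natCast]
          exact Real.rpow_le_rpow_of_exponent_le (hR j) hs
        have hp := pow_pos (hRp j) n
        rw [mul_inv_le_iff₀ hp]
        exact (hc j).trans (by gcongr)

end Series

/-- A lacunary sum of rescaled bumps `λ_j ψ(R_j x)` with `λ_j ≤ 2^{-j} R_j^{s-m}`, `s = (n+α)/p`,
lies in the weighted Sobolev space: every derivative of order `k ≤ m` is again such a series, with
coefficients `λ_j R_j^k ≤ 2^{-j} R_j^s`. -/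
theorem memSobolev_series {n m : ℕ} {p α s : ℝ} (hp : 1 < p) (hα : 0 ≤ α) (hsn : s ≤ n)
    (hsp : s * p ≤ n + α) {ψ : EuclideanSpace ℝ (Fin n) → ℝ} (hψ : IsTest ψ) {R lam : ℕ → ℝ}
    (hR : ∀ j, 1 ≤ R j) (hlam : ∀ j, |lam j| ≤ (1 / 2) ^ j * R j ^ (s - m))
    (hdisj : ∀ x i j, R i • x ∈ tsupport ψ → R j • x ∈ tsupport ψ → i = j) :
    MemSobolev n p α m (fun x => ∑' j, lam j * ψ (R j • x)) := by
  have hRp : ∀ j, 0 < R j := fun j => lt_of_lt_of_le one_pos (hR j)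
  have hcoef : ∀ k ≤ m, ∀ j, |lam j * R j ^ k| ≤ (1 / 2) ^ j * R j ^ s := by
    intro k hk j
    have := hRp j
    rw [abs_mul, abs_of_pos (by positivity : 0 < R j ^ k)]
    calc |lam j| * R j ^ k ≤ (1 / 2) ^ j * R j ^ (s - m) * R j ^ m := by
          gcongr
          · exact hlam j
          · exact hR j
      _ = (1 / 2) ^ j * R j ^ s := by
          rw [mul_assoc, ← Real.rpow_natCast (R j) m, ← Real.rpow_add this]
          simp
  have hc0 : ∀ j, |lam j| ≤ (1 / 2) ^ j * R j ^ s := by simpa using hcoef 0 (Nat.zero_le m)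
  have hd0 : ∀ x i j, ψ (R i • x) ≠ 0 → ψ (R j • x) ≠ 0 → i = j := fun x i j h1 h2 =>
    hdisj x i j (subset_tsupport _ h1) (subset_tsupport _ h2)
  refine ⟨(integrable_series hψ hR hc0 hd0 hsn).locallyIntegrable,
    wLp_series_lt_top hψ hR hc0 hd0 hp hα hsp, fun β hβ => ?_⟩
  obtain ⟨hT, hadj⟩ := HomogAdj.mderiv β
  obtain ⟨ψ', hψ', hsub, H⟩ := hadj ψ hψ
  have hc := hcoef _ hβ
  have hd : ∀ x i j, ψ' (R i • x) ≠ 0 → ψ' (R j • x) ≠ 0 → i = j := fun x i j h1 h2 =>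
    hdisj x i j (hsub (subset_tsupport _ h1)) (hsub (subset_tsupport _ h2))
  refine ⟨fun x => ∑' j, lam j * R j ^ (∑ i, β i) * ψ' (R j • x),
    (integrable_series hψ' hR hc hd hsn).locallyIntegrable,
    wLp_series_lt_top hψ' hR hc hd hp hα hsp, fun φ hφ hφc => ?_⟩
  have h1 := hasSum_series hψ hR hc0 hsn (hT φ ⟨hφ, hφc⟩)
  have h2 := (hasSum_series hψ' hR hc hsn (φ := φ) ⟨hφ, hφc⟩).mul_left ((-1) ^ (∑ i, β i))
  refine h1.unique ?_
  have e : (fun j => lam j * ∫ x, ψ (R j • x) * mderiv n β φ x) = fun j => (-1) ^ (∑ i, β i) *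
      (lam j * R j ^ (∑ i, β i) * ∫ x, ψ' (R j • x) * φ x) := by
    funext j
    rw [H (R j) (hRp j) φ ⟨hφ, hφc⟩]
    ring
  rw [e]
  exact h2

/-! ### Concentrating test functions and Hölder's inequality -/

/-- Cutoff in the transversal variables, equal to `1` on `[3/2, 7/2]` and supported in `[1, 4]`. -/
def transWide : ContDiffBump (5 / 2 : ℝ) := ⟨1, 3 / 2, by norm_num, by norm_num⟩

/-- Cutoff in the transversal variables, supported in `[3/2, 7/2]`, where `transWide` is `1`. -/
def transNarrow : ContDiffBump (5 / 2 : ℝ) := ⟨1 / 2, 1, by norm_num, by norm_num⟩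

theorem transWide_ne_zero {t : ℝ} (h : transWide t ≠ 0) : 1 ≤ t ∧ t ≤ 4 := by
  have h1 : dist t (5 / 2) < 3 / 2 := by
    by_contra! hle
    exact h (transWide.zero_of_le_dist (by simpa [transWide] using hle))
  rw [Real.dist_eq, abs_lt] at h1
  constructor <;> linarith [h1.1, h1.2]

theorem transNarrow_ne_zero {t : ℝ} (h : transNarrow t ≠ 0) :
    1 ≤ t ∧ t ≤ 4 ∧ transWide t = 1 := by
  have h1 : dist t (5 / 2) < 1 := by
    by_contra! hle
    exact h (transNarrow.zero_of_le_dist (by simpa [transNarrow] using hle))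
  have h2 : transWide t = 1 := transWide.one_of_mem_closedBall (by
    simpa [transWide] using h1.le)
  rw [Real.dist_eq, abs_lt] at h1
  exact ⟨by linarith [h1.1], by linarith [h1.2], h2⟩

theorem ae_coord_ne_zero {n : ℕ} (i : Fin n) :
    ∀ᵐ x : EuclideanSpace ℝ (Fin n), x i ≠ 0 := by
  have h1 : ∀ᵐ t : ℝ, t ≠ 0 := by
    rw [ae_iff]; simp
  have h2 := (Measure.quasiMeasurePreserving_eval (fun _ : Fin n => (volume : Measure ℝ)) i).ae h1
  exact (PiLp.volume_preserving_ofLp (Fin n)).quasiMeasurePreserving.ae h2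

/-- The test functions built from one-dimensional profiles concentrating at `0` tend to `0`
in `L^q`. -/
theorem tendsto_lintegral_tens {n : ℕ} (i : Fin n) {b : ℝ → ℝ} (hb : IsTest b)
    {M C q : ℝ} {φ : ℝ → ℝ → ℝ} (hM : 1 ≤ M) (hC : 0 ≤ C) (hq : 0 < q)
    (hφ : ∀ r, M ≤ r → IsTest (φ r) ∧ (∀ t, |φ r t| ≤ C / (1 + r * |t|)) ∧
      (∀ t, 4 ≤ |t| → φ r t = 0)) :
    Filter.Tendsto (fun r => ∫⁻ x, (‖tens i (φ r) b x‖₊ : ℝ≥0∞) ^ q) Filter.atTop (nhds 0) := by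
  let η : ContDiffBump (0 : ℝ) := ⟨4, 5, by norm_num, by norm_num⟩
  have hη : IsTest (fun t => C * η t) := ⟨contDiff_const.mul η.contDiff, η.hasCompactSupport.mul_left⟩
  have hbd : ∀ r, M ≤ r → ∀ t, |φ r t| ≤ |C * η t| := by
    intro r hr t
    have hηn := η.nonneg (x := t)
    rcases le_or_gt 4 |t| with ht | ht
    · rw [(hφ r hr).2.2 t ht, abs_zero]; exact abs_nonneg _
    · rw [η.one_of_mem_closedBall (by simpa [η] using ht.le), mul_one, abs_of_nonneg hC]
      refine ((hφ r hr).2.1 t).trans (div_le_self hC ?_)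
      have : 0 ≤ r * |t| := mul_nonneg (by linarith) (abs_nonneg t)
      linarith
  have hkey := tendsto_lintegral_filter_of_dominated_convergence
    (μ := (volume : Measure (EuclideanSpace ℝ (Fin n)))) (l := Filter.atTop)
    (F := fun r x => (‖tens i (φ r) b x‖₊ : ℝ≥0∞) ^ q) (f := fun _ => 0)
    (bound := fun x => (‖tens i (fun t => C * η t) b x‖₊ : ℝ≥0∞) ^ q) ?_ ?_ ?_ ?_
  · simpa using hkey
  · filter_upwards [Filter.eventually_ge_atTop M] with r hr
    exact ((isTest_tens i (hφ r hr).1 hb).1.continuous.measurable.nnnorm.coe_nnreal_ennreal).pow_const q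
  · filter_upwards [Filter.eventually_ge_atTop M] with r hr
    refine Filter.Eventually.of_forall fun x => ?_
    refine ENNReal.rpow_le_rpow ?_ hq.le
    rw [ENNReal.coe_le_coe, ← NNReal.coe_le_coe, coe_nnnorm, coe_nnnorm, tens, tens, norm_mul,
      norm_mul]
    gcongr
    exact hbd r hr (x i)
  · have := lintegral_test_lt_top (isTest_tens i hη hb) hq le_rfl
    simpa using this.ne
  · filter_upwards [ae_coord_ne_zero i] with x hx
    have hx' : 0 < |x i| := abs_pos.2 hx
    have h1 : Filter.Tendsto (fun r : ℝ => C / (1 + r * |x i|)) Filter.atTop (nhds 0) :=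
      Filter.Tendsto.div_atTop tendsto_const_nhds
        (Filter.tendsto_atTop_add_const_left _ _ (Filter.tendsto_id.atTop_mul_const hx'))
    have h2 : Filter.Tendsto (fun r => φ r (x i)) Filter.atTop (nhds 0) := by
      refine squeeze_zero_norm' ?_ h1
      filter_upwards [Filter.eventually_ge_atTop M] with r hr
      exact (hφ r hr).2.1 _
    have h3 : Filter.Tendsto (fun r => tens i (φ r) b x) Filter.atTop (nhds 0) := by
      simpa [tens] using h2.mul_const (∏ l ∈ Finset.univ.erase i, b (x l))
    have h4 : Filter.Tendsto (fun r => (‖tens i (φ r) b x‖₊ : ℝ≥0∞)) Filter.atTop (nhds 0) := by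
      have := h3.nnnorm
      rw [nnnorm_zero] at this
      simpa using ENNReal.tendsto_coe.2 this
    have h5 := (ENNReal.continuous_rpow_const (y := q)).tendsto 0 |>.comp h4
    simpa [ENNReal.zero_rpow_of_pos hq, Function.comp_def] using h5

/-- Hölder's inequality against a rescaled test function supported in `{R‖x‖ ≥ 1}`, where the
weight is at least `R^{-α}`. -/
theorem holder_scaled {n : ℕ} {p q α R : ℝ} (hpq : p.HolderConjugate q) (hα : 0 ≤ α) (hR : 0 < R)
    {g Φ : EuclideanSpace ℝ (Fin n) → ℝ} (hg : LocallyIntegrable g) (hΦ : IsTest Φ)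
    (hsupp : ∀ y, Φ y ≠ 0 → 1 ≤ ‖y‖) :
    ENNReal.ofReal |∫ x, g x * Φ (R • x)| ≤
      ENNReal.ofReal (R ^ ((n + α) / p - n)) * (wLp n p α g *
        (∫⁻ x, (‖Φ x‖₊ : ℝ≥0∞) ^ q) ^ (1 / q)) := by
  have hp0 := hpq.pos
  have hq0 := hpq.symm.pos
  have hΦm : Measurable fun x => (‖Φ x‖₊ : ℝ≥0∞) :=
    hΦ.1.continuous.measurable.nnnorm.coe_nnreal_ennreal
  have hpt : ∀ x, (‖g x * Φ (R • x)‖₊ : ℝ≥0∞) ≤ ENNReal.ofReal (R ^ (α / p)) *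
      ((fun x => (‖g x‖₊ : ℝ≥0∞) * (‖x‖₊ : ℝ≥0∞) ^ (α / p)) *
        fun x => (‖Φ (R • x)‖₊ : ℝ≥0∞)) x := by
    intro x
    rw [nnnorm_mul, ENNReal.coe_mul, Pi.mul_apply]
    by_cases h0 : Φ (R • x) = 0
    · simp [h0]
    have h1 : 1 ≤ R * ‖x‖ := by
      simpa [norm_smul, abs_of_pos hR] using hsupp _ h0
    have h2 : 1 ≤ ENNReal.ofReal (R ^ (α / p)) * (‖x‖₊ : ℝ≥0∞) ^ (α / p) := by
      rw [coe_nnnorm_eq_ofReal, ENNReal.ofReal_rpow_of_nonneg (norm_nonneg _) (by positivity),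
        ← ENNReal.ofReal_mul (by positivity), ← Real.mul_rpow hR.le (norm_nonneg _),
        ← ENNReal.ofReal_one]
      exact ENNReal.ofReal_le_ofReal (Real.one_le_rpow h1 (by positivity))
    calc (‖g x‖₊ : ℝ≥0∞) * (‖Φ (R • x)‖₊ : ℝ≥0∞)
        = 1 * ((‖g x‖₊ : ℝ≥0∞) * (‖Φ (R • x)‖₊ : ℝ≥0∞)) := by rw [one_mul]
      _ ≤ (ENNReal.ofReal (R ^ (α / p)) * (‖x‖₊ : ℝ≥0∞) ^ (α / p)) *
          ((‖g x‖₊ : ℝ≥0∞) * (‖Φ (R • x)‖₊ : ℝ≥0∞)) := by gcongr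
      _ = _ := by ring
  have hgm : AEMeasurable (fun x => (‖g x‖₊ : ℝ≥0∞) * (‖x‖₊ : ℝ≥0∞) ^ (α / p)) :=
    (hg.aestronglyMeasurable.aemeasurable.nnnorm.coe_nnreal_ennreal).mul
      (measurable_nnnorm_rpow _).aemeasurable
  have hΦRm : AEMeasurable (fun x : EuclideanSpace ℝ (Fin n) => (‖Φ (R • x)‖₊ : ℝ≥0∞)) :=
    (hΦm.comp (measurable_const_smul R)).aemeasurable
  have hscale : ∫⁻ x : EuclideanSpace ℝ (Fin n), (‖Φ (R • x)‖₊ : ℝ≥0∞) ^ q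
      = ENNReal.ofReal ((R ^ n)⁻¹) * ∫⁻ x, (‖Φ x‖₊ : ℝ≥0∞) ^ q :=
    lintegral_comp_smul_eucl (fun x => (‖Φ x‖₊ : ℝ≥0∞) ^ q) (hΦm.pow_const q) hR
  have hw : (∫⁻ x, ((‖g x‖₊ : ℝ≥0∞) * (‖x‖₊ : ℝ≥0∞) ^ (α / p)) ^ p) ^ (1 / p)
      = wLp n p α g := by
    unfold wLp
    congr 1
    refine lintegral_congr fun x => ?_
    rw [ENNReal.mul_rpow_of_nonneg _ _ hp0.le, ← ENNReal.rpow_mul, div_mul_cancel₀ _ hp0.ne']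
  calc ENNReal.ofReal |∫ x, g x * Φ (R • x)|
      ≤ ∫⁻ x, (‖g x * Φ (R • x)‖₊ : ℝ≥0∞) := by
        rw [← Real.norm_eq_abs, ofReal_norm]
        exact enorm_integral_le_lintegral_enorm _
    _ ≤ ∫⁻ x, ENNReal.ofReal (R ^ (α / p)) *
        ((fun x => (‖g x‖₊ : ℝ≥0∞) * (‖x‖₊ : ℝ≥0∞) ^ (α / p)) *
          fun x => (‖Φ (R • x)‖₊ : ℝ≥0∞)) x := lintegral_mono hpt
    _ = ENNReal.ofReal (R ^ (α / p)) * ∫⁻ x,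
        ((fun x => (‖g x‖₊ : ℝ≥0∞) * (‖x‖₊ : ℝ≥0∞) ^ (α / p)) *
          fun x => (‖Φ (R • x)‖₊ : ℝ≥0∞)) x := lintegral_const_mul' _ _ ENNReal.ofReal_ne_top
    _ ≤ ENNReal.ofReal (R ^ (α / p)) * (wLp n p α g *
        (∫⁻ x : EuclideanSpace ℝ (Fin n), (‖Φ (R • x)‖₊ : ℝ≥0∞) ^ q) ^ (1 / q)) := by
        gcongr
        rw [← hw]
        exact ENNReal.lintegral_mul_le_Lp_mul_Lq volume hpq hgm hΦRm
    _ = _ := by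
        have hinv : (R ^ n)⁻¹ = R ^ (-(n : ℝ)) := by
          rw [Real.rpow_neg hR.le, Real.rpow_natCast]
        have hexp : (n + α) / p - n = α / p + -(n : ℝ) * (1 / q) := by
          have := hpq.inv_add_inv_eq_one
          have h1q : 1 / q = 1 - 1 / p := by rw [one_div, one_div]; linarith
          rw [h1q]
          field_simp
          ring
        rw [hscale, ENNReal.mul_rpow_of_nonneg _ _ (by positivity), hinv,
          ENNReal.ofReal_rpow_of_nonneg (by positivity) (by positivity), ← Real.rpow_mul hR.le,
          hexp, Real.rpow_add hR, ENNReal.ofReal_mul (by positivity)]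
        ring

theorem memSobolev_zero (n : ℕ) {p α : ℝ} (m : ℕ) (hp : 1 < p) :
    MemSobolev n p α m (fun _ => 0) := by
  have h : wLp n p α (fun _ => 0) < ∞ := by
    have hp0 : 0 < p := by linarith
    simp [wLp, hp0]
  exact ⟨locallyIntegrable_zero, h, fun β _ => ⟨fun _ => 0, locallyIntegrable_zero, h,
    fun φ _ _ => by simp⟩⟩

/-- A nonzero constant has infinite weighted norm, the weight being at least `1` off the unit
ball. -/
theorem eq_zero_of_wLp_const {n : ℕ} (hn : 1 ≤ n) {p α c : ℝ} (hp : 1 < p) (hα : 0 ≤ α)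
    (h : wLp n p α (fun _ => c) < ∞) : c = 0 := by
  by_contra hc
  have : Nonempty (Fin n) := ⟨⟨0, hn⟩⟩
  have : NoncompactSpace (EuclideanSpace ℝ (Fin n)) := NormedSpace.noncompactSpace ℝ _
  have hp0 : 0 < p := by linarith
  have hfin : ∫⁻ x : EuclideanSpace ℝ (Fin n), (‖c‖₊ : ℝ≥0∞) ^ p * (‖x‖₊ : ℝ≥0∞) ^ α ≠ ∞ := by
    intro htop
    rw [wLp, htop, ENNReal.top_rpow_of_pos (by positivity)] at h
    exact lt_irrefl _ h
  have hε : (‖c‖₊ : ℝ≥0∞) ^ p ≠ 0 := by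
    simp [ENNReal.rpow_eq_zero_iff, hc, hp0]
  have hm := mul_meas_ge_le_lintegral (μ := volume)
    ((measurable_nnnorm_rpow (n := n) α).const_mul ((‖c‖₊ : ℝ≥0∞) ^ p)) ((‖c‖₊ : ℝ≥0∞) ^ p)
  have hsub : (Metric.ball (0 : EuclideanSpace ℝ (Fin n)) 1)ᶜ ⊆
      {x | (‖c‖₊ : ℝ≥0∞) ^ p ≤ (‖c‖₊ : ℝ≥0∞) ^ p * (‖x‖₊ : ℝ≥0∞) ^ α} := by
    intro x hx
    have hx1 : 1 ≤ ‖x‖ := by simpa using hx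
    have : (1 : ℝ≥0∞) ≤ (‖x‖₊ : ℝ≥0∞) ^ α := by
      rw [coe_nnnorm_eq_ofReal, ENNReal.ofReal_rpow_of_nonneg (norm_nonneg _) hα,
        ← ENNReal.ofReal_one]
      exact ENNReal.ofReal_le_ofReal (Real.one_le_rpow hx1 hα)
    exact le_mul_of_one_le_right' this
  have hinf : volume ((Metric.ball (0 : EuclideanSpace ℝ (Fin n)) 1)ᶜ) = ∞ := by
    by_contra hne
    have h1 := measure_univ_le_add_compl (μ := (volume : Measure (EuclideanSpace ℝ (Fin n))))
      (Metric.ball (0 : EuclideanSpace ℝ (Fin n)) 1)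
    rw [measure_univ_of_isAddLeftInvariant, top_le_iff, ENNReal.add_eq_top] at h1
    rcases h1 with h1 | h1
    · exact measure_ball_lt_top.ne h1
    · exact hne h1
  have h2 : volume {x : EuclideanSpace ℝ (Fin n) |
      (‖c‖₊ : ℝ≥0∞) ^ p ≤ (‖c‖₊ : ℝ≥0∞) ^ p * (‖x‖₊ : ℝ≥0∞) ^ α} = ∞ :=
    top_le_iff.1 (hinf ▸ measure_mono hsub)
  rw [h2, ENNReal.mul_top hε, top_le_iff] at hm
  exact hfin hm


/-! ### Pairing the series with the test functions -/

theorem tens_smul {n : ℕ} (i : Fin n) (a b : ℝ → ℝ) (R : ℝ) (x : EuclideanSpace ℝ (Fin n)) :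
    tens i a b (R • x) = tens i (fun t => a (R * t)) (fun t => b (R * t)) x := by
  simp [tens]

theorem mderiv_single_tens_smul {n : ℕ} (i : Fin n) (m : ℕ) {a b : ℝ → ℝ}
    (ha : ContDiff ℝ (⊤ : ℕ∞) a) (hb : ContDiff ℝ (⊤ : ℕ∞) b) (R : ℝ)
    (x : EuclideanSpace ℝ (Fin n)) :
    mderiv n (Pi.single i m) (fun x => tens i a b (R • x)) x
      = R ^ m * tens i (iteratedDeriv m a) b (R • x) := by
  have ha' : ContDiff ℝ (⊤ : ℕ∞) (fun t => a (R * t)) := ha.comp (contDiff_const.mul contDiff_id)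
  have hb' : ContDiff ℝ (⊤ : ℕ∞) (fun t => b (R * t)) := hb.comp (contDiff_const.mul contDiff_id)
  have h : (fun x => tens i a b (R • x)) = tens i (fun t => a (R * t)) (fun t => b (R * t)) :=
    funext fun x => tens_smul i a b R x
  rw [h, mderiv_single_tens i m ha' hb',
    iteratedDeriv_comp_const_mul (ha.of_le (by exact_mod_cast le_top))]
  simp [tens, mul_assoc]

theorem scale_inj {e : ℕ → ℕ} (he : StrictMono e) {t : ℝ} {i j : ℕ}
    (hi : 1 ≤ (8 : ℝ) ^ e i * t ∧ (8 : ℝ) ^ e i * t ≤ 4)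
    (hj : 1 ≤ (8 : ℝ) ^ e j * t ∧ (8 : ℝ) ^ e j * t ≤ 4) : i = j := by
  have key : ∀ {i j : ℕ}, (1 ≤ (8 : ℝ) ^ e i * t) → ((8 : ℝ) ^ e j * t ≤ 4) → j ≤ i := by
    intro i j hi hj
    by_contra! hlt
    obtain ⟨d, hd⟩ := Nat.exists_eq_add_of_lt (he hlt)
    have h1 : (1 : ℝ) ≤ 8 ^ d := one_le_pow₀ (by norm_num)
    have h2 : (8 : ℝ) ^ e j * t = 8 * (8 ^ d * (8 ^ e i * t)) := by
      rw [hd, pow_succ, pow_add]; ring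
    have h3 : 1 ≤ (8 : ℝ) ^ d * (8 ^ e i * t) := one_le_mul_of_one_le_of_one_le h1 hi
    linarith
  exact le_antisymm (key hj.1 hi.2) (key hi.1 hj.2)

theorem tens_ne_zero_coord {n : ℕ} {i l : Fin n} (hl : l ≠ i) {a b : ℝ → ℝ}
    {y : EuclideanSpace ℝ (Fin n)} (h : tens i a b y ≠ 0) : b (y l) ≠ 0 :=
  Finset.prod_ne_zero_iff.1 (right_ne_zero_of_mul h) l (by simp [hl])

/-- The dilates `ψ(8^{e_j} x)` have disjoint supports, being separated by the coordinate `l`. -/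
theorem profile_disjoint {n : ℕ} {i l : Fin n} (hl : l ≠ i) (a : ℝ → ℝ) {e : ℕ → ℕ}
    (he : StrictMono e) (x : EuclideanSpace ℝ (Fin n)) (j k : ℕ)
    (hj : (8 : ℝ) ^ e j • x ∈ tsupport (tens i a transWide))
    (hk : (8 : ℝ) ^ e k • x ∈ tsupport (tens i a transWide)) : j = k := by
  have hcl : IsClosed {y : EuclideanSpace ℝ (Fin n) | 1 ≤ y l ∧ y l ≤ 4} := by
    have hc : Continuous fun y : EuclideanSpace ℝ (Fin n) => y l := by fun_prop
    exact (isClosed_le continuous_const hc).inter (isClosed_le hc continuous_const)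
  have hsub : tsupport (tens i a transWide) ⊆
      {y : EuclideanSpace ℝ (Fin n) | 1 ≤ y l ∧ y l ≤ 4} :=
    closure_minimal (fun y hy => transWide_ne_zero (tens_ne_zero_coord hl hy)) hcl
  exact scale_inj he (t := x l) (by simpa using hsub hj) (by simpa using hsub hk)

/-- On the support of the `j`-th test function the series reduces to its `j`-th term, which
depends there on the coordinate `i` only; the `n`-dimensional pairing thus factors through the
one-dimensional one. -/
theorem integral_series_pairing {n : ℕ} {i l : Fin n} (hl : l ≠ i) (m : ℕ) (G : ℝ → ℝ)
    {u φ : ℝ → ℝ} (hφ : ContDiff ℝ (⊤ : ℕ∞) φ) {e : ℕ → ℕ} (he : StrictMono e) (lam : ℕ → ℝ)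
    (j : ℕ) :
    ∫ x, G (∑' k, lam k * tens i u transWide ((8 : ℝ) ^ e k • x)) *
        mderiv n (Pi.single i m) (fun x => tens i φ transNarrow ((8 : ℝ) ^ e j • x)) x
      = ((8 : ℝ) ^ e j) ^ m * ((((8 : ℝ) ^ e j) ^ n)⁻¹ *
        ((∫ t, G (lam j * u t) * iteratedDeriv m φ t) * (∫ t, transNarrow t) ^ (n - 1))) := by
  have hpt : ∀ x, G (∑' k, lam k * tens i u transWide ((8 : ℝ) ^ e k • x)) *
        mderiv n (Pi.single i m) (fun x => tens i φ transNarrow ((8 : ℝ) ^ e j • x)) x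
      = ((8 : ℝ) ^ e j) ^ m * tens i (fun t => G (lam j * u t) * iteratedDeriv m φ t) transNarrow
          ((8 : ℝ) ^ e j • x) := by
    intro x
    rw [mderiv_single_tens_smul i m hφ transNarrow.contDiff]
    by_cases h0 : ∏ r ∈ Finset.univ.erase i, transNarrow (((8 : ℝ) ^ e j • x) r) = 0
    · simp only [tens, h0, mul_zero]
    have hr : ∀ r, r ≠ i → transNarrow (((8 : ℝ) ^ e j • x) r) ≠ 0 := fun r hr =>
      Finset.prod_ne_zero_iff.1 h0 r (by simp [hr])
    have hsum : ∑' k, lam k * tens i u transWide ((8 : ℝ) ^ e k • x)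
        = lam j * u (((8 : ℝ) ^ e j • x) i) := by
      rw [tsum_eq_single j]
      · have : ∏ r ∈ Finset.univ.erase i, transWide (((8 : ℝ) ^ e j • x) r) = 1 :=
          Finset.prod_eq_one fun r hri =>
            (transNarrow_ne_zero (hr r (Finset.ne_of_mem_erase hri))).2.2
        rw [tens, this, mul_one]
      · intro k hk
        by_contra hne
        have hk1 := transWide_ne_zero (tens_ne_zero_coord hl (right_ne_zero_of_mul hne))
        have hj1 := transNarrow_ne_zero (hr l hl)
        exact hk (scale_inj he (t := x l) (by simpa using hk1) (by simpa using ⟨hj1.1, hj1.2.1⟩))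
    rw [hsum]
    simp only [tens]
    ring
  simp_rw [hpt]
  rw [integral_const_mul, Measure.integral_comp_smul, integral_tens]
  simp [abs_of_pos]

/-- A choice of scales `R_j = 8^{e_j}` growing fast enough for `λ_j = 2^{-j} R_j^δ` to exceed `M`
and to make the quantity `N`, which vanishes at infinity, at most `4^{-j}`. -/
theorem exists_scales {M δ : ℝ} (hδ : 0 < δ) {N : ℝ → ℝ≥0∞}
    (hN : Filter.Tendsto N Filter.atTop (nhds 0)) :
    ∃ e : ℕ → ℕ, StrictMono e ∧ ∀ j, M ≤ (1 / 2 : ℝ) ^ j * ((8 : ℝ) ^ e j) ^ δ ∧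
      N ((1 / 2 : ℝ) ^ j * ((8 : ℝ) ^ e j) ^ δ) ≤ ENNReal.ofReal ((1 / 4) ^ j) := by
  refine Filter.extraction_forall_of_eventually (P := fun j k =>
    M ≤ (1 / 2 : ℝ) ^ j * ((8 : ℝ) ^ k) ^ δ ∧
      N ((1 / 2 : ℝ) ^ j * ((8 : ℝ) ^ k) ^ δ) ≤ ENNReal.ofReal ((1 / 4) ^ j)) fun j => ?_
  have h1 : Filter.Tendsto (fun k : ℕ => (1 / 2 : ℝ) ^ j * ((8 : ℝ) ^ k) ^ δ) Filter.atTop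
      Filter.atTop :=
    ((tendsto_rpow_atTop hδ).comp
      (_root_.tendsto_pow_atTop_atTop_of_one_lt (by norm_num))).const_mul_atTop (by positivity)
  refine (h1.eventually_ge_atTop M).and ((hN.comp h1).eventually_le_const ?_)
  exact ENNReal.ofReal_pos.2 (by positivity)

/-- Degeneracy of composition operators on weighted Sobolev spaces: if `G ∘ f ∈ W^m_p(ℝ^n,|·|^α)`
for every `f ∈ W^m_p(ℝ^n,|·|^α)`, with `2 ≤ m < (n+α)/p`, then `G` is linear. -/
theorem composition_linear_of_maps_sobolev
    (n : ℕ) (hn : 1 ≤ n) (p α : ℝ) (m : ℕ)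
    (hp : 1 < p) (hα0 : 0 ≤ α) (hα : α < n * (p - 1))
    (hm2 : 2 ≤ m) (hm : (m : ℝ) < ((n : ℝ) + α) / p)
    (G : ℝ → ℝ) (hG : ContDiff ℝ 2 G)
    (hcomp : ∀ f : EuclideanSpace ℝ (Fin n) → ℝ,
      MemSobolev n p α m f → MemSobolev n p α m (fun x => G (f x))) :
    ∃ c : ℝ, ∀ t : ℝ, G t = c * t := by
  have hG0 : G 0 = 0 :=
    eq_zero_of_wLp_const hn hp hα0 (hcomp _ (memSobolev_zero n m hp)).2.1
  by_contra hlin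
  obtain ⟨θ, hθ, hA⟩ := exists_test_of_not_linear hG hG0 hlin
  have hp0 : 0 < p := by linarith
  obtain ⟨k, rfl⟩ : ∃ k, m = k + 2 := ⟨m - 2, by omega⟩
  obtain ⟨M, C, φ, hM, hC, hφ⟩ := exists_oneD hG0 hθ k
  set s : ℝ := ((n : ℝ) + α) / p with hs
  have hsn : s ≤ n := by
    rw [hs, div_le_iff₀ hp0]; linarith
  have hn2 : 2 ≤ n := by
    have h : ((k + 2 : ℕ) : ℝ) < n := hm.trans_le hsn
    have h' : k + 2 < n := by exact_mod_cast h
    omega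
  let i0 : Fin n := ⟨0, by omega⟩
  let i1 : Fin n := ⟨1, by omega⟩
  have hi : i1 ≠ i0 := by simp [i0, i1]
  have hpq : p.HolderConjugate p.conjExponent := .conjExponent hp
  set q := p.conjExponent
  have hq0 : 0 < q := hpq.symm.pos
  have hbN : IsTest (fun t => transNarrow t) := isTest_bump _
  have hbW : IsTest (fun t => transWide t) := isTest_bump _
  have hu : IsTest (fun t => t * cutIn t) :=
    ⟨contDiff_id.mul cutIn.contDiff, cutIn.hasCompactSupport.mul_left⟩
  have hN : Filter.Tendsto
      (fun r => (∫⁻ x, (‖tens i0 (φ r) transNarrow x‖₊ : ℝ≥0∞) ^ q) ^ (1 / q))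
      Filter.atTop (nhds 0) := by
    have h1 := tendsto_lintegral_tens i0 hbN hM hC hq0
      (fun r hr => ⟨(hφ r hr).1, (hφ r hr).2.1, (hφ r hr).2.2.1⟩)
    have h2 := ((ENNReal.continuous_rpow_const (y := 1 / q)).tendsto 0).comp h1
    rwa [ENNReal.zero_rpow_of_pos (by positivity)] at h2
  obtain ⟨e, he, hej⟩ := exists_scales (M := M) (sub_pos.2 hm) hN
  set lam : ℕ → ℝ := fun j => (1 / 2 : ℝ) ^ j * ((8 : ℝ) ^ e j) ^ (s - (k + 2 : ℕ)) with hlam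
  have hf : MemSobolev n p α (k + 2)
      (fun x => ∑' j, lam j * tens i0 (fun t => t * cutIn t) transWide ((8 : ℝ) ^ e j • x)) := by
    refine memSobolev_series (s := s) hp hα0 hsn ?_ (isTest_tens i0 hu hbW)
      (fun j => one_le_pow₀ (by norm_num)) (fun j => ?_) (profile_disjoint hi _ he)
    · rw [hs, div_mul_cancel₀ _ hp0.ne']
    · rw [abs_of_nonneg (by positivity)]
  obtain ⟨g, hgl, hgW, hg⟩ := (hcomp _ hf).2.2 (Pi.single i0 (k + 2)) (by simp)
  set A := ∫ t, G t * iteratedDeriv 2 θ t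
  set B := ∫ t, transNarrow t with hBdef
  have hB : 0 < B := transNarrow.integral_pos
  have hκ : 0 < |A| * B ^ (n - 1) := mul_pos (abs_pos.2 hA) (pow_pos hB _)
  have hest : ∀ j : ℕ, |A| * B ^ (n - 1) ≤ (wLp n p α g).toReal * (1 / 2) ^ j := by
    intro j
    obtain ⟨hMj, hNj⟩ := hej j
    obtain ⟨hφj, -, -, hpair⟩ := hφ (lam j) hMj
    set R : ℝ := (8 : ℝ) ^ e j with hRdef
    have hR : 0 < R := by positivity
    have hΦ : IsTest (tens i0 (φ (lam j)) transNarrow) := isTest_tens i0 hφj hbN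
    have hΦR := hΦ.comp_smul hR.ne'
    have h1 := hg _ hΦR.1 hΦR.2
    rw [integral_series_pairing hi (k + 2) G hφj.1 he lam j, hpair] at h1
    have h2 : |∫ x, g x * tens i0 (φ (lam j)) transNarrow (R • x)|
        = R ^ (s - n) * ((1 / 2) ^ j * (|A| * B ^ (n - 1))) := by
      have h3 := congrArg abs h1
      rw [abs_mul _ (∫ x, _), abs_pow (-1), abs_neg, abs_one, one_pow, one_mul] at h3
      rw [← h3, abs_mul, abs_mul, abs_mul, abs_mul, abs_of_pos (pow_pos hR _),
        abs_of_pos (inv_pos.2 (pow_pos hR _)), abs_of_pos (pow_pos hB _), abs_of_pos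
        (show 0 < lam j by positivity)]
      have h4 : R ^ (s - n) = R ^ (k + 2) * ((R ^ n)⁻¹ * R ^ (s - (k + 2 : ℕ))) := by
        rw [← Real.rpow_natCast R (k + 2), ← Real.rpow_natCast R n, ← Real.rpow_neg hR.le,
          ← Real.rpow_add hR, ← Real.rpow_add hR]
        congr 1; ring
      rw [h4]
      simp only [hlam, ← hRdef]
      ring
    have h5 := holder_scaled hpq hα0 hR hgl hΦ (fun y hy => by
      have h6 := (transNarrow_ne_zero (tens_ne_zero_coord hi hy)).1
      exact (h6.trans (le_abs_self _)).trans (PiLp.norm_apply_le y i1))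
    rw [h2, ENNReal.ofReal_mul (by positivity), ENNReal.mul_le_mul_iff_right
      (ENNReal.ofReal_pos.2 (by positivity)).ne' ENNReal.ofReal_ne_top] at h5
    have h7 := h5.trans (mul_le_mul_right hNj _)
    rw [← ENNReal.ofReal_toReal hgW.ne, ← ENNReal.ofReal_mul ENNReal.toReal_nonneg,
      ENNReal.ofReal_le_ofReal_iff (by positivity)] at h7
    have h8 : (1 / 4 : ℝ) ^ j = (1 / 2) ^ j * (1 / 2) ^ j := by rw [← mul_pow]; norm_num
    rw [h8, mul_left_comm (wLp n p α g).toReal] at h7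
    exact le_of_mul_le_mul_left h7 (by positivity)
  have hlim : Filter.Tendsto (fun j : ℕ => (wLp n p α g).toReal * (1 / 2 : ℝ) ^ j) Filter.atTop
      (nhds ((wLp n p α g).toReal * 0)) :=
    (_root_.tendsto_pow_atTop_nhds_zero_of_lt_one (by norm_num) (by norm_num)).const_mul _
  have := ge_of_tendsto' hlim hest
  rw [mul_zero] at this
  exact this.not_gt hκ
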